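/- Let T > 0, M ∈ ℝ with M ≠ 0, and m₀ ∈ ℝ. Define z(t) = 2M/(|M|(T−t)+1) and m(t) = (m₀ − sgn(M)) · ((|M|(T−t)+1)/(|M|T+1))² + sgn(M) for t ∈ [0,T]. Then m is differentiable on [0,T], satisfies m′(t) = −m(t)|z(t)| + z(t) for all t ∈ [0,T] and m(0) = m₀; moreover m is the unique differentiable function on [0,T] with these two properties. -/

import Mathlib

/-!
On `[0, T]` the function `z` has the sign of `M`, so `z = sgn M · |z|` and the equation reads
`(m - sgn M)′ = -|z| (m - sgn M)`. The homogeneous equation `u′ = -|z| u` is also solved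
by `(|M|(T - t) + 1)²`, which does not vanish on `[0, T]`. The quotient of any solution by a
nowhere vanishing one has derivative zero, so it is constant.
-/

open Set

section LinearODE

variable {𝕜 E : Type*} [RCLike 𝕜] [NormedAddCommGroup E] [NormedSpace 𝕜 E]
  {s : Set 𝕜} {a p : 𝕜 → 𝕜} {u w : 𝕜 → E} {c : E} {t₀ : 𝕜}

theorem hasDerivWithinAt_inv_smul_zero {t : 𝕜} (hp : HasDerivWithinAt p (a t * p t) s t)
    (hpt : p t ≠ 0) (hu : HasDerivWithinAt u (a t • u t) s t) :
    HasDerivWithinAt (fun x => (p x)⁻¹ • u x) 0 s t := by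
  refine ((hp.fun_inv hpt).fun_smul hu).congr_deriv ?_
  have coefficient_zero : (p t)⁻¹ * a t + -(a t * p t) / p t ^ 2 = 0 := by
    field_simp
    ring
  rw [smul_smul, ← add_smul, coefficient_zero, zero_smul]

theorem eqOn_div_smul_of_hasDerivWithinAt (hs : Convex ℝ s) (ht₀ : t₀ ∈ s)
    (hp : ∀ t ∈ s, HasDerivWithinAt p (a t * p t) s t) (hp_ne : ∀ t ∈ s, p t ≠ 0)
    (hu : ∀ t ∈ s, HasDerivWithinAt u (a t • u t) s t) :
    EqOn u (fun t => (p t / p t₀) • u t₀) s := by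
  intro t ht
  have quotient_const : (p t)⁻¹ • u t = (p t₀)⁻¹ • u t₀ := by
    have norm_sub_le := hs.norm_image_sub_le_of_norm_hasDerivWithin_le
      (fun x hx => hasDerivWithinAt_inv_smul_zero (hp x hx) (hp_ne x hx) (hu x hx))
      (fun _ _ => norm_zero.le) ht₀ ht
    rwa [zero_mul, norm_le_zero_iff, sub_eq_zero] at norm_sub_le
  calc u t = p t • (p t)⁻¹ • u t := (smul_inv_smul₀ (hp_ne t ht) _).symm
    _ = (p t / p t₀) • u t₀ := by rw [quotient_const, smul_smul, div_eq_mul_inv]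

theorem forall_hasDerivWithinAt_smul_sub_iff_eqOn (hs : Convex ℝ s) (ht₀ : t₀ ∈ s)
    (hp : ∀ t ∈ s, HasDerivWithinAt p (a t * p t) s t) (hp_ne : ∀ t ∈ s, p t ≠ 0) :
    (∀ t ∈ s, HasDerivWithinAt w (a t • (w t - c)) s t) ↔
      EqOn w (fun t => (p t / p t₀) • (w t₀ - c) + c) s := by
  constructor
  · intro hw t ht
    exact sub_eq_iff_eq_add.mp <| eqOn_div_smul_of_hasDerivWithinAt hs ht₀ hp hp_ne
      (fun x hx => (hw x hx).sub_const c) ht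
  · intro hw t ht
    have deriv_formula := (((hp t ht).div_const (p t₀)).smul_const (w t₀ - c)).add_const c
    refine (deriv_formula.congr hw (hw ht)).congr_deriv ?_
    rw [hw ht, add_sub_cancel_right, smul_smul, mul_div_assoc]

end LinearODE

-- Where the base vanishes, `x / 0 = 0` gives the stated derivative its correct value `0`.
theorem hasDerivAt_mul_sub_add_sq {𝕜 : Type*} [NontriviallyNormedField 𝕜] (b T d t : 𝕜) :
    HasDerivAt (fun x => (b * (T - x) + d) ^ 2)
      (-(2 * b / (b * (T - t) + d)) * (b * (T - t) + d) ^ 2) t := by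
  refine (((((hasDerivAt_id t).const_sub T).const_mul b).add_const d).fun_pow 2).congr_deriv ?_
  simp only [id_eq]
  field_simp
  push_cast
  ring

theorem real_sign_mul_abs (x : ℝ) : Real.sign x * |x| = x := by
  rcases lt_trichotomy x 0 with neg | rfl | pos
  · rw [Real.sign_of_neg neg, abs_of_neg neg, neg_one_mul, neg_neg]
  · rw [abs_zero, mul_zero]
  · rw [Real.sign_of_pos pos, abs_of_pos pos, one_mul]

theorem neg_mul_abs_two_mul_div_add (x M : ℝ) {d : ℝ} (hd : 0 ≤ d) :
    -x * |2 * M / d| + 2 * M / d = -(2 * |M| / d) * (x - Real.sign M) := by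
  have abs_quotient : |2 * M / d| = 2 * |M| / d := by
    rw [abs_div, abs_mul, abs_two, abs_of_nonneg hd]
  have sign_mul : 2 * M / d = Real.sign M * (2 * |M| / d) := by
    conv_lhs => rw [← real_sign_mul_abs M]
    ring
  rw [abs_quotient, sign_mul]
  ring

theorem forall_hasDerivWithinAt_neg_mul_abs_add_iff_eqOn {s : Set ℝ} {T M t₀ : ℝ} {w : ℝ → ℝ}
    (hs : Convex ℝ s) (ht₀ : t₀ ∈ s) (pos_on : ∀ t ∈ s, 0 < |M| * (T - t) + 1) :
    (∀ t ∈ s, HasDerivWithinAt w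
      (-(w t) * |2 * M / (|M| * (T - t) + 1)| + 2 * M / (|M| * (T - t) + 1)) s t) ↔
    EqOn w (fun t => (w t₀ - Real.sign M) *
      ((|M| * (T - t) + 1) / (|M| * (T - t₀) + 1)) ^ 2 + Real.sign M) s := by
  simp only [div_pow, mul_comm (w t₀ - Real.sign M)]
  refine Iff.trans (forall₂_congr fun t ht => ?_) (forall_hasDerivWithinAt_smul_sub_iff_eqOn hs ht₀
    (fun t _ => (hasDerivAt_mul_sub_add_sq |M| T 1 t).hasDerivWithinAt)
    (fun t ht => pow_ne_zero 2 (pos_on t ht).ne'))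
  rw [neg_mul_abs_two_mul_div_add (w t) M (pos_on t ht).le, smul_eq_mul]

/-- Let `T > 0`, `M ≠ 0`, `m₀ ∈ ℝ`, `z(t) = 2M/(|M|(T−t)+1)` and
`m(t) = (m₀ − sgn M)·((|M|(T−t)+1)/(|M|T+1))² + sgn M` on `[0,T]`. Then `m` is
differentiable on `[0,T]`, solves `m′ = −m|z| + z` there with `m(0) = m₀`, and is
the unique differentiable function on `[0,T]` with these two properties. -/
theorem stmt_6 (T M m₀ : ℝ) (hT : 0 < T) (hM : M ≠ 0) :
    let z : ℝ → ℝ := fun t => 2*M / (|M| * (T - t) + 1)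
    let m : ℝ → ℝ := fun t =>
      (m₀ - Real.sign M) * ((|M| * (T - t) + 1) / (|M| * T + 1))^2 + Real.sign M
    (∀ t ∈ Set.Icc (0:ℝ) T,
      HasDerivWithinAt m (-(m t) * |z t| + z t) (Set.Icc (0:ℝ) T) t) ∧
    m 0 = m₀ ∧
    (∀ w : ℝ → ℝ,
      (∀ t ∈ Set.Icc (0:ℝ) T,
        HasDerivWithinAt w (-(w t) * |z t| + z t) (Set.Icc (0:ℝ) T) t) →
      w 0 = m₀ →
      ∀ t ∈ Set.Icc (0:ℝ) T, w t = m t) := by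
  intro z m
  have pos_on : ∀ t ∈ Icc 0 T, 0 < |M| * (T - t) + 1 := fun t ht =>
    add_pos_of_nonneg_of_pos (mul_nonneg (abs_nonneg M) (sub_nonneg.mpr ht.2)) one_pos
  have zero_mem : (0 : ℝ) ∈ Icc 0 T := left_mem_Icc.mpr hT.le
  have m_zero : m 0 = m₀ := by
    have ne_zero := (pos_on 0 zero_mem).ne'
    rw [sub_zero] at ne_zero
    simp only [m, sub_zero, div_self ne_zero, one_pow, mul_one, sub_add_cancel]
  have solves_iff (w : ℝ → ℝ) (hw₀ : w 0 = m₀) :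
      (∀ t ∈ Icc 0 T, HasDerivWithinAt w (-(w t) * |z t| + z t) (Icc 0 T) t) ↔
        EqOn w m (Icc 0 T) := by
    simpa only [hw₀, sub_zero] using
      forall_hasDerivWithinAt_neg_mul_abs_add_iff_eqOn (w := w) (convex_Icc 0 T) zero_mem pos_on
  exact ⟨(solves_iff m m_zero).mpr (eqOn_refl m _), m_zero,
    fun w hw hw₀ => (solves_iff w hw₀).mp hw⟩
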